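/- Let R be a probability-measure-preserving countable equivalence relation on a standard probability space (X,μ). If two measurable sets A and B have the same R-conditional measure (i.e. the conditional expectations of their indicator functions with respect to the σ-algebra of R-invariant sets agree almost everywhere), then there exists a partial isomorphism φ in the pseudo full group [[R]] with domain A and range B. -/

import Mathlib

open MeasureTheory

/-- The σ-algebra of `R`-invariant measurable sets. -/
def invariantAlgebra {X : Type*} [MeasurableSpace X] (R : X → X → Prop) :
    MeasurableSpace X where
  MeasurableSet' s := MeasurableSet s ∧ ∀ ⦃x y⦄, R x y → (x ∈ s ↔ y ∈ s)
  measurableSet_empty := ⟨MeasurableSet.empty, by simp⟩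
  measurableSet_compl := fun s hs =>
    ⟨hs.1.compl, fun x y h => by simp [Set.mem_compl_iff, hs.2 h]⟩
  measurableSet_iUnion := fun f hf =>
    ⟨MeasurableSet.iUnion fun i => (hf i).1, fun x y h => by
      simp only [Set.mem_iUnion]; exact exists_congr fun i => (hf i).2 h⟩

/-- The `R`-conditional measure of a set: the conditional expectation of its indicator
function with respect to the σ-algebra of `R`-invariant sets. -/
noncomputable def condMeasure {X : Type*} [MeasurableSpace X] (μ : Measure X)
    (R : X → X → Prop) (A : Set X) : X → ℝ :=
  μ[A.indicator (fun _ => (1 : ℝ)) | invariantAlgebra R]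

/-!
Enumerate transformations `T n` generating `R` and match `A` with `B` greedily: at stage `n`, send
to `B` along `T n` whatever part of `A` not used so far `T n` carries into the unused part of `B`.
The pieces glue to a partial isomorphism from `A' ⊆ A` onto `B' ⊆ B`. It preserves the measure of
traces on invariant sets, so the remainders `A \ A'` and `B \ B'` have equal measure in every
invariant set. No `T n` carries a non-null part of `A \ A'` into `B \ B'`, so `A \ A'` is null in
the saturation of `B \ B'`. Hence `B \ B'` is null, and with it `A \ A'`.

As `X` is not assumed to be standard Borel, the images `T n '' C` used by the greedy step need not
be measurable. They are replaced by measurable `D` with `T n ⁻¹' D = C` modulo `μ`. Such a `D`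
consists of the points `w` for which some `h` in the monoid generated by the `T i` satisfies
`h w ∈ C` and `T n (h w) = w`, the last equality being relaxed to indistinguishability by the
countably many pullbacks of `C` along that monoid. If two choices `h`, `h'` disagreed on a
set `V`, then `T n ⁻¹' V` would contain two disjoint copies of `V`, contradicting invariance of the
measure unless `V` is null.
-/

open Set Function Filter

lemma measure_eq_zero_of_subset_preimage_inter_sdiff {X : Type*} [MeasurableSpace X]
    {μ : Measure X} {g h h' : X → X} {V P : Set X} (hg : MeasurePreserving g μ μ)
    (hh : MeasurePreserving h μ μ) (hh' : MeasurePreserving h' μ μ) (hV : MeasurableSet V)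
    (hP : MeasurableSet P) (hVtop : μ V ≠ ⊤) (hVh : V ⊆ h ⁻¹' (g ⁻¹' V ∩ P))
    (hVh' : V ⊆ h' ⁻¹' (g ⁻¹' V \ P)) : μ V = 0 := by
  have hgV : MeasurableSet (g ⁻¹' V) := hg.measurable hV
  have hdouble : μ V + μ V ≤ μ V + 0 := calc
    μ V + μ V ≤ μ (h ⁻¹' (g ⁻¹' V ∩ P)) + μ (h' ⁻¹' (g ⁻¹' V \ P)) :=
      add_le_add (measure_mono hVh) (measure_mono hVh')
    _ = μ (g ⁻¹' V ∩ P) + μ (g ⁻¹' V \ P) := by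
      rw [hh.measure_preimage (hgV.inter hP).nullMeasurableSet,
        hh'.measure_preimage (hgV.diff hP).nullMeasurableSet]
    _ = μ V + 0 := by
      rw [measure_inter_add_sdiff _ hP, hg.measure_preimage hV.nullMeasurableSet, add_zero]
  exact nonpos_iff_eq_zero.1 ((ENNReal.add_le_add_iff_left hVtop).1 hdouble)

section Itinerary

variable {M X : Type*} [Monoid M] [MulAction M X] {C : Set X}

/-- The itinerary of `x` with respect to `C`: the set of all `g` with `g • x ∈ C`. Two points have
the same itinerary iff no set obtained from `C` by pulling back along the action separates them. -/
def itinerary (M : Type*) {X : Type*} [SMul M X] (C : Set X) (x : X) : Set M :=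
  {g | g • x ∈ C}

lemma itinerary_smul (g : M) (x : X) :
    itinerary M C (g • x) = (· * g) ⁻¹' itinerary M C x := by
  ext h
  simp only [itinerary, mem_ofPred_eq, mem_preimage, mul_smul]

lemma itinerary_smul_congr {x y : X} (h : itinerary M C x = itinerary M C y) (g : M) :
    itinerary M C (g • x) = itinerary M C (g • y) := by
  rw [itinerary_smul, itinerary_smul, h]

lemma mem_iff_mem_of_itinerary_eq {x y : X} (h : itinerary M C x = itinerary M C y) :
    x ∈ C ↔ y ∈ C := by
  simpa only [itinerary, mem_ofPred_eq, one_smul] using Set.ext_iff.1 h 1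

/-- The points `w` at which `h` and `h'` both invert `g` up to itineraries, although `k` separates
`h • w` from `h' • w`.
That these sets are null makes `g` measurably invertible modulo `μ`. -/
def conflictSet (C : Set X) (g h h' k : M) : Set X :=
  {w | (itinerary M C (g • h • w) = itinerary M C w ∧
    itinerary M C (g • h' • w) = itinerary M C w) ∧ k • h • w ∈ C ∧ k • h' • w ∉ C}

lemma mem_conflictSet_of_itinerary_eq {g h h' k : M} {v w : X}
    (hvw : itinerary M C v = itinerary M C w) (hw : w ∈ conflictSet C g h h' k) :
    v ∈ conflictSet C g h h' k := by
  obtain ⟨⟨hgh, hgh'⟩, hk, hk'⟩ := hw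
  have hmul := fun a b : M => itinerary_smul_congr (itinerary_smul_congr hvw b) a
  exact ⟨⟨(hmul g h).trans (hgh.trans hvw.symm), (hmul g h').trans (hgh'.trans hvw.symm)⟩,
    (mem_iff_mem_of_itinerary_eq (hmul k h)).2 hk,
    fun hmem => hk' ((mem_iff_mem_of_itinerary_eq (hmul k h')).1 hmem)⟩

variable [Countable M] [MeasurableSpace X] [MeasurableConstSMul M X]

lemma measurableSet_setOf_itinerary_eq {Y : Type*} [MeasurableSpace Y] (hC : MeasurableSet C)
    {u v : Y → X} (hu : Measurable u) (hv : Measurable v) :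
    MeasurableSet {y | itinerary M C (u y) = itinerary M C (v y)} := by
  simp only [Set.ext_iff, itinerary, mem_ofPred_eq]
  exact measurableSet_setOfPred.2 <| Measurable.forall fun g =>
    (measurableSet_setOfPred.1 ((hu.const_smul g) hC)).iff
      (measurableSet_setOfPred.1 ((hv.const_smul g) hC))

lemma measurableSet_conflictSet (hC : MeasurableSet C) (g h h' k : M) :
    MeasurableSet (conflictSet C g h h' k) := by
  have hk : MeasurableSet {x | k • x ∈ C} := measurable_const_smul k hC
  exact ((measurableSet_setOf_itinerary_eq hC (by fun_prop) measurable_id).inter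
    (measurableSet_setOf_itinerary_eq hC (by fun_prop) measurable_id)).inter
      ((measurable_const_smul h hk).inter (measurable_const_smul h' hk.compl))

variable {μ : Measure X} [IsFiniteMeasure μ] [SMulInvariantMeasure M X μ]

lemma measure_conflictSet (hC : MeasurableSet C) (g h h' k : M) :
    μ (conflictSet C g h h' k) = 0 :=
  measure_eq_zero_of_subset_preimage_inter_sdiff (P := {x | k • x ∈ C})
    (measurePreserving_smul g μ) (measurePreserving_smul h μ) (measurePreserving_smul h' μ)
    (measurableSet_conflictSet hC g h h' k) (measurable_const_smul k hC) (measure_ne_top μ _)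
    (fun _ hw => ⟨mem_conflictSet_of_itinerary_eq hw.1.1 hw, hw.2.1⟩)
    (fun _ hw => ⟨mem_conflictSet_of_itinerary_eq hw.1.2 hw, hw.2.2⟩)

lemma ae_itinerary_smul_eq (hC : MeasurableSet C) (g : M) :
    ∀ᵐ w ∂μ, ∀ h h' : M, itinerary M C (g • h • w) = itinerary M C w →
      itinerary M C (g • h' • w) = itinerary M C w →
        itinerary M C (h • w) = itinerary M C (h' • w) := by
  have hnoConflict : ∀ᵐ w ∂μ, ∀ h h' k : M, w ∉ conflictSet C g h h' k := by
    simp only [ae_all_iff]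
    exact fun h h' k => measure_eq_zero_iff_ae_notMem.1 (measure_conflictSet hC g h h' k)
  filter_upwards [hnoConflict] with w hw h h' hgh hgh'
  exact Subset.antisymm
    (fun k hk => by_contra fun hk' => hw h h' k ⟨⟨hgh, hgh'⟩, hk, hk'⟩)
    (fun k hk' => by_contra fun hk => hw h' h k ⟨⟨hgh', hgh⟩, hk', hk⟩)

theorem exists_measurableSet_smul_preimage_subset_ae_eq (μ : Measure X) [IsFiniteMeasure μ]
    [SMulInvariantMeasure M X μ] {g : M} (hg : ∀ x : X, ∃ h : M, h • g • x = x)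
    (hC : MeasurableSet C) :
    ∃ D, MeasurableSet D ∧ (g • ·) ⁻¹' D ⊆ C ∧ (g • ·) ⁻¹' D =ᵐ[μ] C := by
  let N := toMeasurable μ {w | ¬ ∀ h h' : M, itinerary M C (g • h • w) = itinerary M C w →
    itinerary M C (g • h' • w) = itinerary M C w →
      itinerary M C (h • w) = itinerary M C (h' • w)}
  have hN : MeasurableSet N := measurableSet_toMeasurable _ _
  have hNnull : μ N = 0 := (measure_toMeasurable _).trans (ae_iff.1 (ae_itinerary_smul_eq hC g))
  let D := {w | ∃ h : M, itinerary M C (g • h • w) = itinerary M C w ∧ h • w ∈ C}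
  have hD : MeasurableSet D := by
    simp only [D, ofPred_exists]
    exact MeasurableSet.iUnion fun h =>
      (measurableSet_setOf_itinerary_eq hC (by fun_prop) measurable_id).inter
        (measurable_const_smul h hC)
  have hsub : (g • ·) ⁻¹' (D \ N) ⊆ C := by
    rintro x ⟨⟨h, hgh, hmem⟩, hxN⟩
    obtain ⟨h', hh'⟩ := hg x
    have hgeneric := not_not.1 fun hx => hxN (subset_toMeasurable μ _ hx)
    have heq := hgeneric h h' hgh (by rw [hh'])
    rwa [mem_iff_mem_of_itinerary_eq heq, hh'] at hmem
  have hsup : C ⊆ (g • ·) ⁻¹' D := fun x hx => by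
    obtain ⟨h, hh⟩ := hg x
    exact ⟨h, by rw [hh], by rwa [hh]⟩
  refine ⟨D \ N, hD.diff hN, hsub, hsub.eventuallyLE.antisymm ?_⟩
  have hgN : ∀ᵐ x ∂μ, g • x ∉ N :=
    (measurePreserving_smul g μ).quasiMeasurePreserving.ae (measure_eq_zero_iff_ae_notMem.1 hNnull)
  filter_upwards [hgN] with x hxN hxC using ⟨hsup hxC, hxN⟩

end Itinerary

theorem exists_measurableSet_preimage_subset_ae_eq {ι X : Type*} [Countable ι]
    [MeasurableSpace X] {μ : Measure X} [IsFiniteMeasure μ] {T : ι → X → X}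
    (hT : ∀ i, MeasurePreserving (T i) μ μ) {i : ι} (hinv : ∀ x, ∃ j, T j (T i x) = x)
    {C : Set X} (hC : MeasurableSet C) :
    ∃ D, MeasurableSet D ∧ T i ⁻¹' D ⊆ C ∧ T i ⁻¹' D =ᵐ[μ] C := by
  let _ : MulAction (FreeMonoid ι) X := FreeMonoid.mkMulAction T
  have hword : ∀ w : FreeMonoid ι, MeasurePreserving (w • · : X → X) μ μ := by
    intro w
    induction w using FreeMonoid.inductionOn' with
    | one => exact MeasurePreserving.id μ
    | of_mul i w ih =>
      simp only [mul_smul]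
      exact (hT i).comp ih
  have : MeasurableConstSMul (FreeMonoid ι) X := ⟨fun w => (hword w).measurable⟩
  have : SMulInvariantMeasure (FreeMonoid ι) X μ :=
    ⟨fun w _ hs => (hword w).measure_preimage hs.nullMeasurableSet⟩
  exact exists_measurableSet_smul_preimage_subset_ae_eq μ (g := FreeMonoid.of i)
    (fun x => (hinv x).imp' FreeMonoid.of fun _ hj => hj) hC

section Greedy

variable {α : Type*} {P D : ℕ → Set α}

lemma antitone_of_succ_eq_sdiff (hP : ∀ n, P (n + 1) = P n \ D n) : Antitone P :=
  antitone_nat_of_succ_le fun n => (hP n).trans_subset sdiff_subset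

lemma pairwise_disjoint_of_succ_eq_sdiff (hP : ∀ n, P (n + 1) = P n \ D n)
    (hD : ∀ n, D n ⊆ P n) : Pairwise (Disjoint on D) := by
  refine (pairwise_disjoint_on D).2 fun m n hmn => disjoint_left.2 fun x hxm hxn => ?_
  have hx : x ∈ P (m + 1) := antitone_of_succ_eq_sdiff hP (Nat.succ_le_of_lt hmn) (hD n hxn)
  rw [hP] at hx
  exact hx.2 hxm

lemma iUnion_subset_of_succ_eq_sdiff (hP : ∀ n, P (n + 1) = P n \ D n)
    (hD : ∀ n, D n ⊆ P n) : ⋃ n, D n ⊆ P 0 :=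
  iUnion_subset fun n => (hD n).trans (antitone_of_succ_eq_sdiff hP n.zero_le)

lemma sdiff_iUnion_subset_of_succ_eq_sdiff (hP : ∀ n, P (n + 1) = P n \ D n) (n : ℕ) :
    P 0 \ ⋃ k, D k ⊆ P n := by
  induction n with
  | zero => exact sdiff_subset
  | succ n ih =>
    rw [hP]
    exact fun x hx => ⟨ih hx, fun hxn => hx.2 (mem_iUnion_of_mem n hxn)⟩

variable {X Y : Type*} [MeasurableSpace X] [MeasurableSpace Y] {μ : Measure X} {T : ℕ → X → Y}

lemma exists_greedy_remainders (hT : ∀ n, Measurable (T n))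
    (hlift : ∀ n (C : Set X), MeasurableSet C →
      ∃ E, MeasurableSet E ∧ T n ⁻¹' E ⊆ C ∧ T n ⁻¹' E =ᵐ[μ] C)
    {A : Set X} {B : Set Y} (hA : MeasurableSet A) (hB : MeasurableSet B) :
    ∃ (P : ℕ → Set X) (Q E : ℕ → Set Y), P 0 = A ∧ Q 0 = B ∧
      (∀ n, P (n + 1) = P n \ T n ⁻¹' E n) ∧ (∀ n, Q (n + 1) = Q n \ E n) ∧
      ∀ n, MeasurableSet (E n) ∧ T n ⁻¹' E n ⊆ P n ∧ E n ⊆ Q n ∧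
        μ ((P n ∩ T n ⁻¹' Q n) \ T n ⁻¹' E n) = 0 := by
  have hstep : ∀ n (P : Set X) (Q : Set Y), MeasurableSet P ∧ MeasurableSet Q →
      ∃ E, MeasurableSet E ∧ T n ⁻¹' E ⊆ P ∧ E ⊆ Q ∧ μ ((P ∩ T n ⁻¹' Q) \ T n ⁻¹' E) = 0 := by
    rintro n P Q ⟨hP, hQ⟩
    obtain ⟨E, hE, hsub, hae⟩ := hlift n (P ∩ T n ⁻¹' Q) (hP.inter (hT n hQ))
    refine ⟨E ∩ Q, hE.inter hQ, fun x hx => (hsub hx.1).1, inter_subset_right,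
      measure_mono_null ?_ (ae_le_set.1 hae.symm.le)⟩
    exact fun x hx => ⟨hx.1, fun hxE => hx.2 ⟨hxE, hx.1.2⟩⟩
  choose! E hE using hstep
  let PQ : ℕ → Set X × Set Y := fun n =>
    n.rec (A, B) fun n p => (p.1 \ T n ⁻¹' E n p.1 p.2, p.2 \ E n p.1 p.2)
  have hPQ : ∀ n, MeasurableSet (PQ n).1 ∧ MeasurableSet (PQ n).2 := by
    intro n
    induction n with
    | zero => exact ⟨hA, hB⟩
    | succ n ih =>
      have hEn := (hE n _ _ ih).1
      exact ⟨ih.1.diff (hT n hEn), ih.2.diff hEn⟩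
  exact ⟨fun n => (PQ n).1, fun n => (PQ n).2, fun n => E n (PQ n).1 (PQ n).2, rfl, rfl,
    fun _ => rfl, fun _ => rfl, fun n => hE n _ _ (hPQ n)⟩

theorem exists_pairwise_disjoint_preimages_maximal (hT : ∀ n, Measurable (T n))
    (hlift : ∀ n (C : Set X), MeasurableSet C →
      ∃ E, MeasurableSet E ∧ T n ⁻¹' E ⊆ C ∧ T n ⁻¹' E =ᵐ[μ] C)
    {A : Set X} {B : Set Y} (hA : MeasurableSet A) (hB : MeasurableSet B) :
    ∃ E : ℕ → Set Y, (∀ n, MeasurableSet (E n)) ∧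
      Pairwise (Disjoint on fun n => T n ⁻¹' E n) ∧ Pairwise (Disjoint on E) ∧
      ⋃ n, T n ⁻¹' E n ⊆ A ∧ ⋃ n, E n ⊆ B ∧
      ∀ n, μ ((A \ ⋃ k, T k ⁻¹' E k) ∩ T n ⁻¹' (B \ ⋃ k, E k)) = 0 := by
  obtain ⟨P, Q, E, rfl, rfl, hP, hQ, hE⟩ := exists_greedy_remainders hT hlift hA hB
  refine ⟨E, fun n => (hE n).1, pairwise_disjoint_of_succ_eq_sdiff hP fun n => (hE n).2.1,
    pairwise_disjoint_of_succ_eq_sdiff hQ fun n => (hE n).2.2.1,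
    iUnion_subset_of_succ_eq_sdiff hP fun n => (hE n).2.1,
    iUnion_subset_of_succ_eq_sdiff hQ fun n => (hE n).2.2.1, fun n => ?_⟩
  refine measure_mono_null ?_ (hE n).2.2.2
  rintro x ⟨hx, hTx⟩
  exact ⟨⟨sdiff_iUnion_subset_of_succ_eq_sdiff hP n hx,
      sdiff_iUnion_subset_of_succ_eq_sdiff hQ n hTx⟩,
    fun hxE => hx.2 (mem_iUnion_of_mem n hxE)⟩

end Greedy

section PartialIso

variable {X : Type*} [MeasurableSpace X] {μ : Measure X} {R : X → X → Prop}

/-- `φ` restricts to a partial isomorphism of the pseudo full group `[[R]]` with domain `A` and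
range `B`. Values of `φ` off `A` are irrelevant. Only `φ`, and not its inverse, is required to be
measurable, as `X` need not be standard Borel. -/
structure IsPartialIso (μ : Measure X) (R : X → X → Prop) (φ : X → X) (A B : Set X) : Prop where
  measurableSet_source : MeasurableSet A
  measurableSet_target : MeasurableSet B
  bijOn : BijOn φ A B
  rel : ∀ x ∈ A, R x (φ x)
  measurePreserving : MeasurePreserving φ (μ.restrict A) (μ.restrict B)

lemma measurePreserving_restrict_iUnion {ι Y : Type*} [Countable ι] [MeasurableSpace Y]
    {ν : Measure Y} {φ : X → Y} {s : ι → Set X} {t : ι → Set Y} (hφ : Measurable φ)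
    (hs : ∀ i, MeasurableSet (s i)) (ht : ∀ i, MeasurableSet (t i))
    (hsd : Pairwise (Disjoint on s)) (htd : Pairwise (Disjoint on t))
    (h : ∀ i, MeasurePreserving φ (μ.restrict (s i)) (ν.restrict (t i))) :
    MeasurePreserving φ (μ.restrict (⋃ i, s i)) (ν.restrict (⋃ i, t i)) := by
  refine ⟨hφ, ?_⟩
  rw [Measure.restrict_iUnion hsd hs, Measure.restrict_iUnion htd ht,
    Measure.map_sum hφ.aemeasurable]
  simp only [(h _).map_eq]

namespace IsPartialIso

variable {φ ψ : X → X} {A B S : Set X}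

lemma of_preimage (hφ : Bijective φ) (hμ : MeasurePreserving φ μ μ) (hR : ∀ x, R x (φ x))
    (hB : MeasurableSet B) : IsPartialIso μ R φ (φ ⁻¹' B) B where
  measurableSet_source := hμ.measurable hB
  measurableSet_target := hB
  bijOn := by
    simpa only [image_preimage_eq B hφ.surjective] using
      (hφ.injective.injOn (s := φ ⁻¹' B)).bijOn_image
  rel x _ := hR x
  measurePreserving := hμ.restrict_preimage hB

lemma congr (hφ : IsPartialIso μ R φ A B) (hψ : Measurable ψ) (h : EqOn φ ψ A) :
    IsPartialIso μ R ψ A B where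
  measurableSet_source := hφ.measurableSet_source
  measurableSet_target := hφ.measurableSet_target
  bijOn := hφ.bijOn.congr h
  rel x hx := h hx ▸ hφ.rel x hx
  measurePreserving := ⟨hψ, by
    rw [← hφ.measurePreserving.map_eq]
    exact Measure.map_congr <| EventuallyEq.symm <|
      ae_restrict_of_forall_mem hφ.measurableSet_source h⟩

lemma exists_iUnion {ι : Type*} [Countable ι] [Nonempty ι] {f : ι → X → X} {s t : ι → Set X}
    (hf : ∀ i, IsPartialIso μ R (f i) (s i) (t i)) (hs : Pairwise (Disjoint on s))
    (ht : Pairwise (Disjoint on t)) : ∃ φ, IsPartialIso μ R φ (⋃ i, s i) (⋃ i, t i) := by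
  obtain ⟨φ, hφm, hφf⟩ := exists_measurable_piecewise s (fun i => (hf i).measurableSet_source) f
    (fun i => (hf i).measurePreserving.measurable)
    (fun i j hij => by simp only [(hs hij).inter_eq, eqOn_empty])
  have hφ : ∀ i, IsPartialIso μ R φ (s i) (t i) := fun i => (hf i).congr hφm (hφf i).symm
  refine ⟨φ, .iUnion fun i => (hφ i).measurableSet_source,
    .iUnion fun i => (hφ i).measurableSet_target, bijOn_iUnion (fun i => (hφ i).bijOn) ?_, ?_,
    measurePreserving_restrict_iUnion hφm (fun i => (hφ i).measurableSet_source)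
      (fun i => (hφ i).measurableSet_target) hs ht fun i => (hφ i).measurePreserving⟩
  · intro x hx y hy hxy
    obtain ⟨i, hxi⟩ := mem_iUnion.1 hx
    obtain ⟨j, hyj⟩ := mem_iUnion.1 hy
    obtain rfl : i = j := ht.eq <| not_disjoint_iff.2
      ⟨φ x, (hφ i).bijOn.mapsTo hxi, hxy ▸ (hφ j).bijOn.mapsTo hyj⟩
    exact (hφ i).bijOn.injOn hxi hyj hxy
  · intro x hx
    obtain ⟨i, hxi⟩ := mem_iUnion.1 hx
    exact (hφ i).rel x hxi

lemma measure_inter_preimage (h : IsPartialIso μ R φ A B) (hS : MeasurableSet S) :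
    μ (A ∩ φ ⁻¹' S) = μ (B ∩ S) := by
  rw [inter_comm A, inter_comm B, ← Measure.restrict_apply hS,
    ← Measure.restrict_apply (h.measurePreserving.measurable hS),
    h.measurePreserving.measure_preimage hS.nullMeasurableSet]

lemma measure_inter_eq (h : IsPartialIso μ R φ A B) (hS : MeasurableSet[invariantAlgebra R] S) :
    μ (A ∩ S) = μ (B ∩ S) := by
  rw [← h.measure_inter_preimage hS.1]
  congr 1
  ext x
  exact and_congr_right fun hx => hS.2 (h.rel x hx)

theorem exists_inverse [Nonempty X] (h : IsPartialIso μ R φ A B) (hR : ∀ ⦃x y⦄, R x y → R y x) :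
    ∃ ψ : X → X, BijOn ψ B A ∧ (∀ y ∈ B, R y (ψ y)) ∧
      ∀ s ⊆ B, MeasurableSet s → MeasurableSet (ψ '' s) ∧ μ (ψ '' s) = μ s := by
  have hinv : InvOn (invFunOn φ A) φ A B := h.bijOn.invOn_invFunOn
  have hbij : BijOn (invFunOn φ A) B A := h.bijOn.symm hinv.symm
  refine ⟨invFunOn φ A, hbij, fun y hy => ?_, fun s hs hsm => ?_⟩
  · simpa only [hinv.2 hy] using hR (h.rel _ (hbij.mapsTo hy))
  · have himage : invFunOn φ A '' s = A ∩ φ ⁻¹' s := by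
      rw [← inter_eq_left.2 hs, hinv.2.image_inter', hbij.image_eq, inter_eq_left.2 hs, inter_comm]
    rw [himage, h.measure_inter_preimage hsm, inter_eq_right.2 hs]
    exact ⟨h.measurableSet_source.inter (h.measurePreserving.measurable hsm), rfl⟩

end IsPartialIso

end PartialIso

section InvariantSets

variable {X : Type*} [MeasurableSpace X] {μ : Measure X} {R : X → X → Prop}
  {A B A' B' : Set X}

lemma measurableSet_invariantAlgebra_iUnion_preimage {ι : Type*} [Countable ι] {T : ι → X → X}
    (hR : Equivalence R) (hT : ∀ i, Measurable (T i)) (hRT : ∀ x y, R x y ↔ ∃ i, T i x = y)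
    (hB : MeasurableSet B) : MeasurableSet[invariantAlgebra R] (⋃ i, T i ⁻¹' B) := by
  refine ⟨.iUnion fun i => hT i hB, ?_⟩
  have hmem : ∀ x, x ∈ ⋃ i, T i ⁻¹' B ↔ ∃ z ∈ B, R x z := by
    simp only [mem_iUnion, mem_preimage, hRT]
    grind
  intro x y hxy
  rw [hmem, hmem]
  exact exists_congr fun z => and_congr_right fun _ =>
    ⟨hR.trans (hR.symm hxy), hR.trans hxy⟩

lemma measure_eq_zero_of_measure_inter_preimage_eq_zero {ι : Type*} [Countable ι]
    {T : ι → X → X} (hR : Equivalence R) (hT : ∀ i, Measurable (T i))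
    (hRT : ∀ x y, R x y ↔ ∃ i, T i x = y) (hB : MeasurableSet B)
    (hAB : ∀ S, MeasurableSet[invariantAlgebra R] S → μ (A ∩ S) = μ (B ∩ S))
    (hnull : ∀ i, μ (A ∩ T i ⁻¹' B) = 0) : μ B = 0 := by
  have hBsub : B ⊆ ⋃ i, T i ⁻¹' B := fun x hx => by
    obtain ⟨i, hi⟩ := (hRT x x).1 (hR.refl x)
    exact mem_iUnion_of_mem i (by rwa [mem_preimage, hi])
  calc
    μ B = μ (B ∩ ⋃ i, T i ⁻¹' B) := by rw [inter_eq_left.2 hBsub]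
    _ = μ (A ∩ ⋃ i, T i ⁻¹' B) :=
      (hAB _ (measurableSet_invariantAlgebra_iUnion_preimage hR hT hRT hB)).symm
    _ = 0 := by rw [inter_iUnion, measure_iUnion_null hnull]

variable [IsFiniteMeasure μ] {T : ℕ → X → X}

lemma invariantAlgebra_le (R : X → X → Prop) : invariantAlgebra R ≤ ‹MeasurableSpace X› :=
  fun _ hs => hs.1

lemma setIntegral_condMeasure (hA : MeasurableSet A) {S : Set X}
    (hS : MeasurableSet[invariantAlgebra R] S) :
    ∫ x in S, condMeasure μ R A x ∂μ = μ.real (A ∩ S) := by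
  rw [condMeasure, setIntegral_condExp (invariantAlgebra_le R)
    ((integrable_const (1 : ℝ)).indicator hA) hS, integral_indicator_const _ hA,
    measureReal_restrict_apply hA, smul_eq_mul, mul_one]

lemma measure_inter_eq_of_condMeasure_ae_eq (hA : MeasurableSet A) (hB : MeasurableSet B)
    (hAB : condMeasure μ R A =ᵐ[μ] condMeasure μ R B) {S : Set X}
    (hS : MeasurableSet[invariantAlgebra R] S) : μ (A ∩ S) = μ (B ∩ S) := by
  rw [← measureReal_eq_measureReal_iff, ← setIntegral_condMeasure hA hS,
    ← setIntegral_condMeasure hB hS]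
  exact integral_congr_ae (ae_restrict_of_ae hAB)

lemma measure_sdiff_inter_eq {S : Set X} (hA' : MeasurableSet A') (hB' : MeasurableSet B')
    (hS : MeasurableSet S) (hA'A : A' ⊆ A) (hB'B : B' ⊆ B) (h : μ (A ∩ S) = μ (B ∩ S))
    (h' : μ (A' ∩ S) = μ (B' ∩ S)) : μ ((A \ A') ∩ S) = μ ((B \ B') ∩ S) := by
  rw [inter_sdiff_distrib_right, inter_sdiff_distrib_right,
    measure_sdiff (inter_subset_inter_left S hA'A) (hA'.inter hS).nullMeasurableSet
      (measure_ne_top μ _),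
    measure_sdiff (inter_subset_inter_left S hB'B) (hB'.inter hS).nullMeasurableSet
      (measure_ne_top μ _), h, h']

theorem exists_maximal_isPartialIso (hTbij : ∀ n, Bijective (T n))
    (hT : ∀ n, MeasurePreserving (T n) μ μ) (hTR : ∀ n x, R x (T n x))
    (hinv : ∀ n x, ∃ m, T m (T n x) = x) (hA : MeasurableSet A) (hB : MeasurableSet B) :
    ∃ φ A' B', A' ⊆ A ∧ B' ⊆ B ∧ IsPartialIso μ R φ A' B' ∧
      ∀ n, μ ((A \ A') ∩ T n ⁻¹' (B \ B')) = 0 := by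
  obtain ⟨E, hE, hsource, htarget, hsourceA, htargetB, hmax⟩ :=
    exists_pairwise_disjoint_preimages_maximal (fun n => (hT n).measurable)
      (fun n _ => exists_measurableSet_preimage_subset_ae_eq hT (hinv n)) hA hB
  obtain ⟨φ, hφ⟩ := IsPartialIso.exists_iUnion
    (fun n => IsPartialIso.of_preimage (hTbij n) (hT n) (hTR n) (hE n)) hsource htarget
  exact ⟨φ, _, _, hsourceA, htargetB, hφ, hmax⟩

theorem exists_isPartialIso_of_condMeasure_ae_eq (hTbij : ∀ n, Bijective (T n))
    (hT : ∀ n, MeasurePreserving (T n) μ μ) (hR : Equivalence R)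
    (hRT : ∀ x y, R x y ↔ ∃ n, T n x = y) (hA : MeasurableSet A) (hB : MeasurableSet B)
    (hAB : condMeasure μ R A =ᵐ[μ] condMeasure μ R B) :
    ∃ φ A' B', A' ⊆ A ∧ B' ⊆ B ∧ μ (A \ A') = 0 ∧ μ (B \ B') = 0 ∧
      IsPartialIso μ R φ A' B' := by
  have hTR : ∀ n x, R x (T n x) := fun n x => (hRT _ _).2 ⟨n, rfl⟩
  obtain ⟨φ, A', B', hA'A, hB'B, hφ, hmax⟩ := exists_maximal_isPartialIso hTbij hT hTR
    (fun n x => (hRT _ _).1 (hR.symm (hTR n x))) hA hB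
  have hremainders : ∀ S, MeasurableSet[invariantAlgebra R] S →
      μ ((A \ A') ∩ S) = μ ((B \ B') ∩ S) := fun S hS =>
    measure_sdiff_inter_eq hφ.measurableSet_source hφ.measurableSet_target hS.1 hA'A hB'B
      (measure_inter_eq_of_condMeasure_ae_eq hA hB hAB hS) (hφ.measure_inter_eq hS)
  have hBnull : μ (B \ B') = 0 :=
    measure_eq_zero_of_measure_inter_preimage_eq_zero hR (fun n => (hT n).measurable) hRT
      (hB.diff hφ.measurableSet_target) hremainders hmax
  have hAnull : μ (A \ A') = 0 := by
    simpa only [inter_univ, hBnull] using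
      hremainders univ (@MeasurableSet.univ _ (invariantAlgebra R))
  exact ⟨φ, A', B', hA'A, hB'B, hAnull, hBnull, hφ⟩

end InvariantSets

/-- If two measurable sets have the same `R`-conditional measure, there is a partial
isomorphism in the pseudo full group `[[R]]` with domain `A` and range `B` (mod null sets). -/
theorem pseudo_full_group_transitive {X : Type*} [MeasurableSpace X]
    (μ : Measure X) [IsProbabilityMeasure μ] (R : X → X → Prop) (hR : Equivalence R)
    (hFM : ∃ T : ℕ → Equiv.Perm X, (∀ n, MeasurePreserving (T n) μ μ) ∧
      ∀ x y, R x y ↔ ∃ n, T n x = y)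
    (A B : Set X) (hA : MeasurableSet A) (hB : MeasurableSet B)
    (hAB : condMeasure μ R A =ᵐ[μ] condMeasure μ R B) :
    ∃ (φ : X → X) (A' B' : Set X), A' ⊆ A ∧ B' ⊆ B ∧ μ (A \ A') = 0 ∧ μ (B \ B') = 0 ∧
      MeasurableSet A' ∧ MeasurableSet B' ∧ Set.BijOn φ A' B' ∧
      (∀ x ∈ A', R x (φ x)) ∧
      (∀ s ⊆ A', MeasurableSet s → MeasurableSet (φ '' s) ∧ μ (φ '' s) = μ s) := by
  obtain ⟨T, hT, hRT⟩ := hFM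
  have : Nonempty X := nonempty_of_isProbabilityMeasure μ
  obtain ⟨ψ, B', A', hB'B, hA'A, hBnull, hAnull, hψ⟩ := exists_isPartialIso_of_condMeasure_ae_eq
    (fun n => (T n).bijective) hT hR hRT hB hA hAB.symm
  obtain ⟨φ, hφbij, hφR, hφμ⟩ := hψ.exists_inverse fun _ _ => hR.symm
  exact ⟨φ, A', B', hA'A, hB'B, hAnull, hBnull, hψ.measurableSet_target,
    hψ.measurableSet_source, hφbij, hφR, hφμ⟩
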